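/- arXiv:2008.03505 — 4 statements merged into one kernel-verified Lean document; each statement's English description precedes it below -/
import Mathlib

section
/- Let p > 2 be a prime, let a > 1 and m ≥ 1 be integers, and set d = a²m² + 4ap. Suppose integers x, y satisfy x² − d·y² = ε·4p where ε ∈ {1, −1}, and define X = ((am² + 2p)·x − m·d·y)/(2p) and Y = (m·x − (am² + 2p)·y)/(2p). Then X² − d·Y² = ε·4p. -/
/-!
In `R[√d]`, that is `QuadraticAlgebra R d 0`, the element `α = (a * m ^ 2 + 2 * p) + m * √d` has
norm `(2 * p) ^ 2`, and the equations for `X` and `Y` say that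
`2 * p * (X + Y * √d) = α * (x - y * √d)`. Conjugation preserves norms, so taking norms and
cancelling `(2 * p) ^ 2` gives the result.
-/

section QuadraticNorm

variable {R : Type*} [CommRing R]

theorem quadraticAlgebra_norm_smul {a b : R} (c : R) (z : QuadraticAlgebra R a b) :
    (c • z).norm = c ^ 2 * z.norm := by
  rw [Algebra.smul_def, map_mul, QuadraticAlgebra.norm_algebraMap]

theorem quadraticAlgebra_norm_eq_of_smul_eq_mul_star {a b c : R} (hc : IsLeftRegular c)
    {α w z : QuadraticAlgebra R a b} (hα : α.norm = c ^ 2) (h : c • z = α * star w) :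
    z.norm = w.norm := by
  apply hc.pow 2
  calc c ^ 2 * z.norm = (c • z).norm := (quadraticAlgebra_norm_smul c z).symm
    _ = α.norm * (star w).norm := by rw [h, map_mul]
    _ = c ^ 2 * w.norm := by rw [hα, QuadraticAlgebra.norm_star]

theorem quadraticAlgebra_norm_mk_eq_sq_sub_mul_sq (d x y : R) :
    (⟨x, y⟩ : QuadraticAlgebra R d 0).norm = x ^ 2 - d * y ^ 2 := by
  rw [QuadraticAlgebra.norm_def]
  ring

theorem sq_sub_mul_sq_eq_of_mul_eq {d c u v x y X Y : R} (hc : IsLeftRegular c)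
    (huv : u ^ 2 - d * v ^ 2 = c ^ 2)
    (hX : c * X = u * x - v * d * y) (hY : c * Y = v * x - u * y) :
    X ^ 2 - d * Y ^ 2 = x ^ 2 - d * y ^ 2 := by
  simp only [← quadraticAlgebra_norm_mk_eq_sq_sub_mul_sq] at huv ⊢
  refine quadraticAlgebra_norm_eq_of_smul_eq_mul_star hc huv ?_
  rw [QuadraticAlgebra.smul_mk, QuadraticAlgebra.star_mk, QuadraticAlgebra.mk_mul_mk,
    smul_eq_mul, smul_eq_mul, hX, hY]
  ext <;> ring

end QuadraticNorm

theorem stmt_3_general {R : Type*} [CommRing R] {p a m d x y X Y : R}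
    (h2p : IsLeftRegular (2 * p)) (hd : d = a ^ 2 * m ^ 2 + 4 * a * p)
    (hX : 2 * p * X = (a * m ^ 2 + 2 * p) * x - m * d * y)
    (hY : 2 * p * Y = m * x - (a * m ^ 2 + 2 * p) * y) :
    X ^ 2 - d * Y ^ 2 = x ^ 2 - d * y ^ 2 := by
  have norm_multiplier : (a * m ^ 2 + 2 * p) ^ 2 - d * m ^ 2 = (2 * p) ^ 2 := by
    rw [hd]
    ring
  exact sq_sub_mul_sq_eq_of_mul_eq h2p norm_multiplier hX hY

/-- Let `p > 2` be a prime, let `a > 1` and `m ≥ 1` be integers, and set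
`d = a²m² + 4ap`. Suppose integers `x, y` satisfy `x² − d·y² = ε·4p` where
`ε ∈ {1, −1}`, and define `X = ((am² + 2p)·x − m·d·y)/(2p)` and
`Y = (m·x − (am² + 2p)·y)/(2p)` (these are integers). Then
`X² − d·Y² = ε·4p`. -/
theorem stmt_3 (p a m d : ℤ) (hp : Prime p) (hp2 : 2 < p)
    (ha : 1 < a) (hm : 1 ≤ m) (hd : d = a ^ 2 * m ^ 2 + 4 * a * p)
    (ε : ℤ) (hε : ε = 1 ∨ ε = -1)
    (x y : ℤ) (hxy : x ^ 2 - d * y ^ 2 = ε * (4 * p))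
    (X Y : ℤ)
    (hX : 2 * p * X = (a * m ^ 2 + 2 * p) * x - m * d * y)
    (hY : 2 * p * Y = m * x - (a * m ^ 2 + 2 * p) * y) :
    X ^ 2 - d * Y ^ 2 = ε * (4 * p) := by
  have two_mul_p_ne_zero : 2 * p ≠ 0 := mul_ne_zero two_ne_zero hp.ne_zero
  exact (stmt_3_general (IsRegular.of_ne_zero two_mul_p_ne_zero).left hd hX hY).trans hxy
end

section
/- Let p > 2 be a prime, let a ≥ 1 and m ≥ 1 be integers, and set d = a²m² + 4ap. There are no integers x and y with y ≥ 1 satisfying both (am² + 4p)·y ≤ m·x and x² − d·y² = ±4p (that is, x² − d·y² equal to 4p or to −4p). -/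
/-!
Write `q = 4 * p` and `D = a * m ^ 2 + q`, so that `d = a * D` and `m ^ 2 * d = D ^ 2 - q * D`.
Hence `m ^ 2 * (x ^ 2 - d * y ^ 2) = (m * x) ^ 2 - (D * y) ^ 2 + q * (D * y ^ 2)`. If
`0 ≤ D * y ≤ m * x`, this is at least `q * (D * y ^ 2)`, and `D * y ^ 2 ≥ D > m ^ 2`, so that
`x ^ 2 - d * y ^ 2` exceeds `q` and in particular is neither `q` nor `-q`.
-/

section

variable {R : Type*} [CommRing R]

theorem sq_mul_sq_sub_mul_sq (q a m x y : R) :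
    m ^ 2 * (x ^ 2 - (a ^ 2 * m ^ 2 + a * q) * y ^ 2) =
      (m * x) ^ 2 - ((a * m ^ 2 + q) * y) ^ 2 + q * ((a * m ^ 2 + q) * y ^ 2) := by
  ring

variable [LinearOrder R] [IsStrictOrderedRing R] {q a m x y : R}

theorem sq_lt_add_mul_sq (hq : 0 < q) (hay : 1 ≤ a * y ^ 2) :
    m ^ 2 < (a * m ^ 2 + q) * y ^ 2 := by
  have hy : y ≠ 0 := by
    rintro rfl
    exact hay.not_gt (by simp)
  calc
    m ^ 2 ≤ m ^ 2 * (a * y ^ 2) := le_mul_of_one_le_right (sq_nonneg m) hay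
    _ < m ^ 2 * (a * y ^ 2) + q * y ^ 2 :=
      lt_add_of_pos_right _ (mul_pos hq (by positivity))
    _ = (a * m ^ 2 + q) * y ^ 2 := by ring

theorem lt_sq_sub_mul_sq (hq : 0 < q) (hay : 1 ≤ a * y ^ 2)
    (h : ((a * m ^ 2 + q) * y) ^ 2 ≤ (m * x) ^ 2) :
    q < x ^ 2 - (a ^ 2 * m ^ 2 + a * q) * y ^ 2 := by
  refine lt_of_mul_lt_mul_left ?_ (sq_nonneg m)
  calc
    m ^ 2 * q = q * m ^ 2 := mul_comm _ _
    _ < q * ((a * m ^ 2 + q) * y ^ 2) := mul_lt_mul_of_pos_left (sq_lt_add_mul_sq hq hay) hq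
    _ ≤ (m * x) ^ 2 - ((a * m ^ 2 + q) * y) ^ 2 + q * ((a * m ^ 2 + q) * y ^ 2) :=
      le_add_of_nonneg_left (sub_nonneg.2 h)
    _ = m ^ 2 * (x ^ 2 - (a ^ 2 * m ^ 2 + a * q) * y ^ 2) := (sq_mul_sq_sub_mul_sq q a m x y).symm

theorem stmt_4_general {p d : R} (hp : 0 < p) (ha : 1 ≤ a)
    (hd : d = a ^ 2 * m ^ 2 + 4 * a * p) (hy : 1 ≤ y)
    (hxy : (a * m ^ 2 + 4 * p) * y ≤ m * x) :
    4 * p < x ^ 2 - d * y ^ 2 := by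
  have hay : 1 ≤ a * y ^ 2 := one_le_mul_of_one_le_of_one_le ha (one_le_pow₀ hy)
  have hDy : 0 ≤ (a * m ^ 2 + 4 * p) * y := by positivity
  have hd' : d = a ^ 2 * m ^ 2 + a * (4 * p) := by rw [hd]; ring
  rw [hd']
  exact lt_sq_sub_mul_sq (by positivity) hay (pow_le_pow_left₀ hDy hxy 2)

end

/-- Let `p > 2` be a prime, let `a ≥ 1` and `m ≥ 1` be integers, and set
`d = a²m² + 4ap`. There are no integers `x` and `y` with `y ≥ 1` satisfying
both `(am² + 4p)·y ≤ m·x` and `x² − d·y² = ±4p`. -/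
theorem stmt_4 (p a m d : ℤ) (hp : Prime p) (hp2 : 2 < p)
    (ha : 1 ≤ a) (hm : 1 ≤ m) (hd : d = a ^ 2 * m ^ 2 + 4 * a * p) :
    ¬ ∃ x y : ℤ, 1 ≤ y ∧ (a * m ^ 2 + 4 * p) * y ≤ m * x ∧
      (x ^ 2 - d * y ^ 2 = 4 * p ∨ x ^ 2 - d * y ^ 2 = -(4 * p)) := by
  rintro ⟨x, y, hy, hxy, h⟩
  have hlt := stmt_4_general (by linarith) ha hd hy hxy
  rcases h with h | h <;> linarith
end

section
/- Let p > 2 be a prime and let a > 1 and m ≥ 1 be integers such that d = a²m² + 4ap is squarefree and p divides m. Then h(d) > 1. -/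
/-!
Suppose that `d = abc` is squarefree with non-unit factors and that `K = ℚ(√d)` has class number
one. Coprime factors of a square in a principal ideal domain are squares up to units, so `-1`, `a`
and `b` are unit multiples of squares in `𝓞 K`. The unit group has at most two generators, hence
at most two independent classes modulo squares, so some nonempty subproduct of `-1`, `a`, `b` is a
square in `K`. But `1` and `d` are the only divisors of `d` that are squares in `K`, and neither
is such a subproduct.

If `m = pk`, then `a²m² + 4ap = a · p · (apk² + 4)` supplies the three factors.
-/

open NumberField Module

theorem span_modN_mkQ_image_eq_top {A : Type*} [AddCommGroup A] (n : ℕ) {s : Set A}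
    (hs : AddSubgroup.closure s = ⊤) : Submodule.span (ZMod n) (ModN.mkQ n '' s) = ⊤ := by
  refine Submodule.toAddSubgroup_injective (top_unique fun x _ ↦ ?_)
  obtain ⟨y, rfl⟩ := Submodule.mkQ_surjective _ x
  have hle : AddSubgroup.closure s ≤
      (Submodule.span (ZMod n) (ModN.mkQ n '' s)).toAddSubgroup.comap (ModN.mkQ n) :=
    (AddSubgroup.closure_le _).2 fun _ hx ↦ Submodule.subset_span (Set.mem_image_of_mem _ hx)
  exact hle (hs ▸ AddSubgroup.mem_top y)

theorem exists_nonempty_even_sum_of_card_lt {A ι : Type*} [AddCommGroup A] [Fintype ι]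
    {S : Finset A} (hS : AddSubgroup.closure (S : Set A) = ⊤) (hcard : S.card < Fintype.card ι)
    (v : ι → A) : ∃ s : Finset ι, s.Nonempty ∧ Even (∑ i ∈ s, v i) := by
  classical
  have hspan : Submodule.span (ZMod 2) (S.image (ModN.mkQ 2) : Set (ModN A 2)) = ⊤ := by
    rw [Finset.coe_image, span_modN_mkQ_image_eq_top 2 hS]
  have hdep : ¬ LinearIndependent (ZMod 2) (fun i ↦ ModN.mkQ 2 (v i)) := fun hli ↦ by
    have hle := linearIndependent_le_span_finset _ hli _ hspan
    rw [Cardinal.mk_fintype, Nat.cast_le] at hle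
    exact hcard.not_ge (hle.trans Finset.card_image_le)
  obtain ⟨c, hc, i, hi⟩ := Fintype.not_linearIndependent_iff.1 hdep
  refine ⟨Finset.univ.filter (c · ≠ 0), ⟨i, by simpa using hi⟩, ?_⟩
  have hsum : ModN.mkQ 2 (∑ j with c j ≠ 0, v j) = 0 := by
    have hcases : ∀ z : ZMod 2, z = 0 ∨ z = 1 := by decide
    rw [map_sum, Finset.sum_filter]
    refine (Finset.sum_congr rfl fun j _ ↦ ?_).trans hc
    rcases hcases (c j) with h | h <;> simp [h]
  obtain ⟨x, hx⟩ := (Submodule.Quotient.mk_eq_zero _).1 hsum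
  exact ⟨x, hx.symm.trans (two_zsmul x)⟩

theorem exists_nonempty_isSquare_prod_of_card_lt {G ι : Type*} [CommGroup G] [Fintype ι]
    {S : Finset G} (hS : Subgroup.closure (S : Set G) = ⊤) (hcard : S.card < Fintype.card ι)
    (v : ι → G) : ∃ s : Finset ι, s.Nonempty ∧ IsSquare (∏ i ∈ s, v i) := by
  have hS' : AddSubgroup.closure (S.map Additive.ofMul.toEmbedding : Set (Additive G)) = ⊤ := by
    rw [Finset.coe_map, Equiv.coe_toEmbedding, Equiv.image_eq_preimage_symm]
    simpa [Subgroup.toAddSubgroup_closure] using congrArg Subgroup.toAddSubgroup hS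
  obtain ⟨s, hs, h⟩ := exists_nonempty_even_sum_of_card_lt hS' (by rwa [Finset.card_map])
    (Additive.ofMul ∘ v)
  refine ⟨s, hs, ?_⟩
  simpa [← ofMul_prod] using h

theorem exists_nonempty_isSquare_prod_of_associated {R ι : Type*} [CommMonoid R] [Fintype ι]
    {S : Finset Rˣ} (hS : Subgroup.closure (S : Set Rˣ) = ⊤) (hcard : S.card < Fintype.card ι)
    {x : ι → R} (hx : ∀ i, ∃ y, Associated (y ^ 2) (x i)) :
    ∃ s : Finset ι, s.Nonempty ∧ IsSquare (∏ i ∈ s, x i) := by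
  choose y u hyu using hx
  obtain ⟨s, hs, w, hw⟩ := exists_nonempty_isSquare_prod_of_card_lt hS hcard u
  refine ⟨s, hs, (∏ i ∈ s, y i) * w, ?_⟩
  calc ∏ i ∈ s, x i = (∏ i ∈ s, y i) ^ 2 * (∏ i ∈ s, u i : Rˣ) := by
        simp only [← hyu, Finset.prod_mul_distrib, Finset.prod_pow, Units.coe_prod]
    _ = (∏ i ∈ s, y i) * w * ((∏ i ∈ s, y i) * w) := by
        rw [hw, Units.val_mul, sq, mul_mul_mul_comm]

section NumberField

variable (K : Type*) [Field K] [NumberField K]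

theorem exists_finset_closure_units_eq_top : ∃ S : Finset (𝓞 K)ˣ,
    S.card ≤ Units.rank K + 1 ∧ Subgroup.closure (S : Set (𝓞 K)ˣ) = ⊤ := by
  classical
  obtain ⟨ζ, hζ⟩ := (Subgroup.isCyclic_iff_exists_zpowers_eq_top (Units.torsion K)).1 inferInstance
  refine ⟨insert ζ (Finset.univ.image (Units.fundSystem K)), ?_, ?_⟩
  · refine (Finset.card_insert_le _ _).trans (Nat.succ_le_succ ?_)
    exact Finset.card_image_le.trans_eq (Finset.card_fin _)
  · rw [Finset.coe_insert, Set.insert_eq, Subgroup.closure_union, ← Subgroup.zpowers_eq_closure, hζ,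
      Finset.coe_image, Finset.coe_univ, Set.image_univ, sup_comm,
      Units.closure_fundSystem_sup_torsion_eq_top]

theorem units_rank_lt_finrank : Units.rank K < finrank ℚ K := by
  have hcard := InfinitePlace.card_eq_nrRealPlaces_add_nrComplexPlaces K
  have hdeg := InfinitePlace.card_add_two_mul_card_eq_rank K
  have hpos : 0 < Fintype.card (InfinitePlace K) := Fintype.card_pos
  unfold Units.rank
  omega

end NumberField

theorem eq_one_of_squarefree_of_isSquare {z : ℤ} (hz : Squarefree z) (hsq : IsSquare z) :
    z = 1 := by
  obtain ⟨x, rfl⟩ := hsq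
  exact Int.isUnit_mul_self (hz x dvd_rfl)

theorem isSquare_or_isSquare_mul_of_finrank_eq_two {F K : Type*} [Field F] [CommRing K]
    [Algebra F K] (hF : (2 : F) ≠ 0) (hdeg : finrank F K = 2) {d e : F} (hd : ¬ IsSquare d)
    (hdK : IsSquare (algebraMap F K d)) (heK : IsSquare (algebraMap F K e)) :
    IsSquare e ∨ IsSquare (e * d) := by
  have : Nontrivial K := nontrivial_of_finrank_pos (R := F) (by omega)
  obtain ⟨α, hα⟩ := hdK
  obtain ⟨x, hx⟩ := heK
  have hαF : ∀ c : F, c • 1 ≠ α := by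
    rintro c rfl
    refine hd ⟨c, (algebraMap F K).injective ?_⟩
    rw [hα, Algebra.smul_def, mul_one, map_mul]
  have hspan := ((LinearIndependent.pair_iff' one_ne_zero).2 hαF).span_eq_top_of_card_eq_finrank
    (by rw [Fintype.card_fin, hdeg])
  rw [Matrix.range_cons_cons_empty] at hspan
  obtain ⟨u, v, rfl⟩ := Submodule.mem_span_pair.1 (hspan ▸ Submodule.mem_top : x ∈ _)
  -- This rearranges `(u + v * α) ^ 2 = e`; independence of `1, α` makes both sides vanish.
  have hexpand : (e - u ^ 2 - v ^ 2 * d) • (1 : K) = (2 * u * v) • α := by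
    simp only [Algebra.smul_def, map_sub, map_mul, map_pow, map_ofNat, hx, hα]
    ring
  have huv : 2 * u * v = 0 := by
    by_contra hne
    refine hαF ((2 * u * v)⁻¹ * (e - u ^ 2 - v ^ 2 * d)) ?_
    rw [mul_smul, hexpand, inv_smul_smul₀ hne]
  have he : e - u ^ 2 - v ^ 2 * d = 0 := by simpa [huv] using hexpand
  rcases mul_eq_zero.1 huv with hu | rfl
  · obtain rfl : u = 0 := (mul_eq_zero.1 hu).resolve_left hF
    exact .inr ⟨v * d, by linear_combination d * he⟩
  · exact .inl ⟨u, by linear_combination he⟩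

theorem eq_one_or_eq_of_dvd_of_isSquare_intCast {K : Type*} [CommRing K] [Algebra ℚ K]
    (hdeg : finrank ℚ K = 2) {d e : ℤ} (hd : Squarefree d) (hd1 : d ≠ 1) (hed : e ∣ d)
    (hdK : IsSquare (d : K)) (heK : IsSquare (e : K)) : e = 1 ∨ e = d := by
  have hdℚ : ¬ IsSquare (d : ℚ) := fun h ↦
    hd1 (eq_one_of_squarefree_of_isSquare hd (Rat.isSquare_intCast_iff.1 h))
  obtain ⟨t, rfl⟩ := hed
  rcases isSquare_or_isSquare_mul_of_finrank_eq_two two_ne_zero hdeg hdℚ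
    (by simpa using hdK) (e := e) (by simpa using heK) with he | hed
  · exact .inl (eq_one_of_squarefree_of_isSquare hd.of_mul_left (Rat.isSquare_intCast_iff.1 he))
  · have he0 : (e : ℚ) ≠ 0 := by exact_mod_cast hd.of_mul_left.ne_zero
    have ht : IsSquare (t : ℚ) := by
      have := hed.div (IsSquare.mul_self (e : ℚ))
      rwa [Int.cast_mul, ← mul_assoc, mul_div_cancel_left₀ _ (mul_ne_zero he0 he0)] at this
    rw [eq_one_of_squarefree_of_isSquare hd.of_mul_right (Rat.isSquare_intCast_iff.1 ht)]
    simp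

theorem exists_associated_sq_of_dvd_of_squarefree {R : Type*} [CommRing R] [IsDomain R]
    [IsBezout R] {d e : ℤ} (hd : Squarefree d) (hed : e ∣ d) (hdR : IsSquare (d : R)) :
    ∃ y : R, Associated (y ^ 2) (e : R) := by
  obtain ⟨t, rfl⟩ := hed
  obtain ⟨α, hα⟩ := hdR
  have hcop : IsCoprime (e : R) (t : R) := by
    simpa using (IsRelPrime.of_squarefree_mul hd).isCoprime.map (Int.castRingHom R)
  exact exists_associated_pow_of_mul_eq_pow' hcop (by rw [← Int.cast_mul, hα, sq])

theorem isSquare_algebraMap_iff {R K : Type*} [CommRing R] [IsIntegrallyClosed R] [CommRing K]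
    [Algebra R K] [IsFractionRing R K] {x : R} :
    IsSquare (algebraMap R K x) ↔ IsSquare x := by
  refine ⟨?_, fun h ↦ h.map (algebraMap R K)⟩
  rintro ⟨y, hy⟩
  obtain ⟨z, rfl⟩ := IsIntegrallyClosed.exists_algebraMap_eq_of_isIntegral_pow (R := R) two_pos
    (show IsIntegral R (y ^ 2) by rw [sq, ← hy]; exact isIntegral_algebraMap)
  exact ⟨z, IsFractionRing.injective R K (by rw [hy, map_mul])⟩

theorem isSquare_intCast_ringOfIntegers_iff {K : Type*} [Field K] [NumberField K] {d : ℤ} :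
    IsSquare (d : 𝓞 K) ↔ IsSquare (d : K) := by
  rw [← isSquare_algebraMap_iff (K := K), map_intCast]

theorem prod_neg_one_pair_dvd {R : Type*} [CommRing R] (a b : R) (s : Finset (Fin 3)) :
    ∏ i ∈ s, ![-1, a, b] i ∣ a * b := by
  simpa [Fin.prod_univ_three] using
    Finset.prod_dvd_prod_of_subset s Finset.univ ![-1, a, b] s.subset_univ

theorem prod_neg_one_pair_ne_one {R : Type*} [CommRing R] (hR : (-1 : R) ≠ 1) {a b : R}
    (ha : ¬ IsUnit a) (hb : ¬ IsUnit b) {s : Finset (Fin 3)} (hs : s.Nonempty) :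
    ∏ i ∈ s, ![-1, a, b] i ≠ 1 := by
  intro hprod
  have hunit := IsUnit.prod_iff.1 (hprod ▸ isUnit_one)
  have hs0 : s = {0} := by
    refine hs.subset_singleton_iff.1 fun i hi ↦ Finset.mem_singleton.2 ?_
    fin_cases i
    exacts [rfl, absurd (hunit 1 hi) ha, absurd (hunit 2 hi) hb]
  exact hR (by simpa [hs0] using hprod)

theorem one_lt_classNumber_of_squarefree_mul_mul {K : Type*} [Field K] [NumberField K]
    (hdeg : finrank ℚ K = 2) {a b c : ℤ} (ha : ¬ IsUnit a) (hb : ¬ IsUnit b) (hc : ¬ IsUnit c)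
    (hsf : Squarefree (a * b * c)) (hK : IsSquare ((a * b * c : ℤ) : K)) :
    1 < classNumber K := by
  by_contra hcl
  have hpos : 0 < classNumber K := Fintype.card_pos
  have : IsPrincipalIdealRing (𝓞 K) := classNumber_eq_one_iff.1 (by omega)
  have hsq : ∀ i, ∃ y : 𝓞 K, Associated (y ^ 2) (![-1, a, b] i : 𝓞 K) := fun i ↦ by
    refine exists_associated_sq_of_dvd_of_squarefree hsf ?_
      (isSquare_intCast_ringOfIntegers_iff.2 hK)
    fin_cases i
    exacts [neg_dvd.2 (one_dvd _), (dvd_mul_right a b).mul_right c, (dvd_mul_left b a).mul_right c]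
  obtain ⟨S, hcard, hS⟩ := exists_finset_closure_units_eq_top K
  have hS_lt : S.card < Fintype.card (Fin 3) := by
    have hrank := units_rank_lt_finrank K
    rw [Fintype.card_fin]
    omega
  obtain ⟨s, hs, hprod⟩ := exists_nonempty_isSquare_prod_of_associated hS hS_lt hsq
  rw [← Int.cast_prod, isSquare_intCast_ringOfIntegers_iff] at hprod
  have hdvd := prod_neg_one_pair_dvd a b s
  have hd1 : a * b * c ≠ 1 := fun h ↦ hc (.of_mul_eq_one_right _ h)
  rcases eq_one_or_eq_of_dvd_of_isSquare_intCast hdeg hsf hd1 (hdvd.mul_right c) hK hprod with h | h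
  · exact prod_neg_one_pair_ne_one (by decide) ha hb hs h
  · have habc : a * b * c ∣ a * b * 1 := by rwa [mul_one, ← h]
    exact hc (isUnit_of_dvd_one ((mul_dvd_mul_iff_left hsf.of_mul_left.ne_zero).1 habc))

theorem not_isUnit_mul_mul_sq_add_four {a p : ℤ} (ha : ¬ IsUnit a) (hp : ¬ IsUnit p) (k : ℤ) :
    ¬ IsUnit (a * p * k ^ 2 + 4) := by
  have not_prime : ¬ Prime (a * (p * k ^ 2)) := fun h ↦
    (h.irreducible.isUnit_or_isUnit rfl).elim ha fun hu ↦ hp (isUnit_of_mul_isUnit_left hu)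
  intro h
  rcases Int.isUnit_iff.1 h with h | h
  · have hthree : a * (p * k ^ 2) = -3 := by linear_combination h
    exact not_prime (hthree ▸ Int.prime_three.neg)
  · have hfive : a * (p * k ^ 2) = -5 := by linear_combination h
    exact not_prime (hfive ▸ Prime.neg (by norm_num))

theorem stmt_7_general {p a m d : ℤ} (hp : ¬ IsUnit p) (ha : ¬ IsUnit a)
    (hd : d = a ^ 2 * m ^ 2 + 4 * a * p) (hsf : Squarefree d) (hpm : p ∣ m)
    {K : Type*} [Field K] [NumberField K] (hdeg : finrank ℚ K = 2)
    {α : K} (hα : α ^ 2 = (d : K)) : 1 < classNumber K := by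
  obtain ⟨k, rfl⟩ := hpm
  obtain rfl : d = a * p * (a * p * k ^ 2 + 4) := by rw [hd]; ring
  exact one_lt_classNumber_of_squarefree_mul_mul hdeg ha hp
    (not_isUnit_mul_mul_sq_add_four ha hp k) hsf ⟨α, by rw [← hα, sq]⟩

/-- Let `p > 2` be a prime and let `a > 1` and `m ≥ 1` be integers such that
`d = a²m² + 4ap` is squarefree and `p` divides `m`. Then `h(d) > 1`, where
`h(d)` is the class number of the real quadratic field `ℚ(√d)`. -/
theorem stmt_7 (p a m d : ℤ) (hp : Prime p) (hp2 : 2 < p)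
    (ha : 1 < a) (hm : 1 ≤ m) (hd : d = a ^ 2 * m ^ 2 + 4 * a * p)
    (hsf : Squarefree d) (hpm : p ∣ m)
    (K : Type) [Field K] [NumberField K] (hdeg : Module.finrank ℚ K = 2)
    (α : K) (hα : α ^ 2 = (d : K)) :
    1 < NumberField.classNumber K := by
  have ha_unit : ¬ IsUnit a := fun h ↦ by rcases Int.isUnit_iff.1 h with h | h <;> omega
  exact stmt_7_general hp.not_isUnit ha_unit hd hsf hpm hdeg hα
end

section
/- Let p > 2 be a prime and let a > 1 and m ≥ 1 be integers such that d = a²m² + 4ap is squarefree and gcd(m, p) = 1. Then p splits completely in the real quadratic field ℚ(√d); that is, the ideal generated by p in the ring of integers of ℚ(√d) factors as 𝔞·𝔞′ where 𝔞 and 𝔞′ are distinct prime ideals, each of norm p. -/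
/-!
Put `n = am`. Since `d ≡ n² (mod p)`, the product `(√d + n)(√d - n)` is divisible by `p`, while the
two factors differ by `2n`, which is prime to `p`. Hence the ideals `(p, √d + n)` and `(p, √d - n)`
are comaximal with product `(p)`. Neither is the unit ideal: otherwise `p` would divide `√d ± n`,
hence its trace `±2n`. As the norms of the two ideals multiply to `p²`, both are equal to `p`.

The trace of `√d` vanishes because `d` is not a square: a squarefree square is `1`, and `d = 1`
would force `a = ±1` and `m² - 1 = ∓4p`, which is impossible modulo `8` for odd `p`.
-/

section TraceZero

open Polynomial in
theorem trace_eq_zero_of_sq_eq_algebraMap {F L : Type*} [Field F] [Field L] [Algebra F L]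
    [FiniteDimensional F L] {c : F} (hc : ¬ IsSquare c) {α : L} (hα : α ^ 2 = algebraMap F L c) :
    Algebra.trace F L α = 0 := by
  have hirr : Irreducible (X ^ 2 - C c) :=
    X_pow_sub_C_irreducible_of_prime Nat.prime_two fun b hb => hc ⟨b, by rw [← hb, sq]⟩
  have hmin : minpoly F α = X ^ 2 - C c :=
    (minpoly.eq_of_irreducible_of_monic hirr (by simp [hα])
      (monic_X_pow_sub_C c two_ne_zero)).symm
  have hnext : (X ^ 2 - C c).nextCoeff = 0 := by
    rw [nextCoeff_of_natDegree_pos (by simp), natDegree_X_pow_sub_C]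
    simp [coeff_X_pow]
  rw [trace_eq_finrank_mul_minpoly_nextCoeff, hmin, hnext, neg_zero, mul_zero]

open scoped NumberField in
theorem trace_eq_zero_of_sq_eq_intCast {K : Type*} [Field K] [NumberField K] {d : ℤ}
    (hd : ¬ IsSquare d) {w : 𝓞 K} (hw : w ^ 2 = d) :
    Algebra.trace ℤ (𝓞 K) w = 0 := by
  have hwK : (w : K) ^ 2 = algebraMap ℚ K d := by
    simpa using congrArg (algebraMap (𝓞 K) K) hw
  have htrace := trace_eq_zero_of_sq_eq_algebraMap (mt Rat.isSquare_intCast_iff.1 hd) hwK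
  rw [← Algebra.coe_trace_int] at htrace
  exact_mod_cast htrace

theorem dvd_finrank_mul_of_algebraMap_dvd_add {R S : Type*} [CommRing R] [StrongRankCondition R]
    [CommRing S] [Algebra R S] [Module.Free R S] {p n : R} {w : S}
    (hw : Algebra.trace R S w = 0) (hdvd : algebraMap R S p ∣ w + algebraMap R S n) :
    p ∣ Module.finrank R S * n := by
  obtain ⟨x, hx⟩ := hdvd
  refine ⟨Algebra.trace R S x, ?_⟩
  calc (Module.finrank R S : R) * n
      = Algebra.trace R S (w + algebraMap R S n) := by
        rw [map_add, hw, Algebra.trace_algebraMap, zero_add, nsmul_eq_mul]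
    _ = p * Algebra.trace R S x := by
        rw [hx, ← Algebra.smul_def, map_smul, smul_eq_mul]

end TraceZero

section SpanPair

variable {R : Type*} [CommRing R] {p x y : R}

theorem isCoprime_span_pair_of_isCoprime_sub (h : IsCoprime p (x - y)) :
    IsCoprime (Ideal.span {p, x}) (Ideal.span {p, y}) := by
  obtain ⟨u, v, huv⟩ := h
  refine Ideal.isCoprime_iff_exists.2 ⟨u * p + v * x, ?_, -v * y, ?_, by linear_combination huv⟩
  · exact Ideal.mem_span_pair.2 ⟨u, v, rfl⟩
  · exact Ideal.mul_mem_left _ _ (Ideal.subset_span (by simp))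

theorem span_pair_mul_span_pair_eq_span_singleton
    (hcop : IsCoprime (Ideal.span {p, x}) (Ideal.span {p, y})) (hxy : p ∣ x * y) :
    Ideal.span {p, x} * Ideal.span {p, y} = Ideal.span {p} := by
  apply le_antisymm
  · rw [Ideal.span_pair_mul_span_pair, Ideal.span_le]
    rintro z (rfl | rfl | rfl | rfl) <;> rw [SetLike.mem_coe, Ideal.mem_span_singleton]
    · exact dvd_mul_right p p
    · exact dvd_mul_right p y
    · exact dvd_mul_left p x
    · exact hxy
  · rw [Ideal.mul_eq_inf_of_isCoprime hcop]
    exact le_inf (Ideal.span_mono (by simp)) (Ideal.span_mono (by simp))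

end SpanPair

section RankTwo

variable {S : Type*} [CommRing S] [IsDedekindDomain S] [Module.Free ℤ S] [Module.Finite ℤ S]
  {p : ℤ}

theorem absNorm_eq_natAbs_of_mul_eq_span (hrank : Module.finrank ℤ S = 2) (hp : Prime p)
    {A B : Ideal S} (hA : A ≠ ⊤) (hB : B ≠ ⊤) (hAB : A * B = Ideal.span {(p : S)}) :
    Ideal.absNorm A = p.natAbs ∧ Ideal.absNorm B = p.natAbs := by
  have hnorm : Ideal.absNorm A * Ideal.absNorm B = p.natAbs ^ 2 := by
    rw [← map_mul, hAB, Ideal.absNorm_span_singleton, ← eq_intCast (algebraMap ℤ S),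
      Algebra.norm_algebraMap, hrank, Int.natAbs_pow]
  exact ((Int.prime_iff_natAbs_prime.1 hp).mul_eq_prime_sq_iff
    (mt Ideal.absNorm_eq_one_iff.1 hA) (mt Ideal.absNorm_eq_one_iff.1 hB)).1 hnorm

theorem exists_isPrime_mul_eq_span_of_dvd_mul (hrank : Module.finrank ℤ S = 2) (hp : Prime p)
    {x y : S} (hxy : (p : S) ∣ x * y) (hx : ¬ (p : S) ∣ x) (hy : ¬ (p : S) ∣ y)
    (hcop : IsCoprime (p : S) (x - y)) :
    ∃ A B : Ideal S, A ≠ B ∧ A.IsPrime ∧ B.IsPrime ∧ Ideal.span {(p : S)} = A * B ∧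
      (Ideal.absNorm A : ℤ) = |p| ∧ (Ideal.absNorm B : ℤ) = |p| := by
  have hABcop := isCoprime_span_pair_of_isCoprime_sub hcop
  have hAB := span_pair_mul_span_pair_eq_span_singleton hABcop hxy
  set A := Ideal.span {(p : S), x}
  set B := Ideal.span {(p : S), y}
  have hA : A ≠ ⊤ := by
    intro h
    rw [h, Ideal.top_mul] at hAB
    exact hy (Ideal.mem_span_singleton.1 (hAB ▸ Ideal.subset_span (by simp)))
  have hB : B ≠ ⊤ := by
    intro h
    rw [h, Ideal.mul_top] at hAB
    exact hx (Ideal.mem_span_singleton.1 (hAB ▸ Ideal.subset_span (by simp)))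
  have hne : A ≠ B := fun h => hA (Ideal.isUnit_iff.1 (isCoprime_self.1 (h ▸ hABcop)))
  obtain ⟨hnA, hnB⟩ := absNorm_eq_natAbs_of_mul_eq_span hrank hp hA hB hAB
  have hirr : Irreducible p.natAbs := Int.prime_iff_natAbs_prime.1 hp
  exact ⟨A, B, hne, Ideal.isPrime_of_irreducible_absNorm (hnA ▸ hirr),
    Ideal.isPrime_of_irreducible_absNorm (hnB ▸ hirr), hAB.symm,
    by rw [hnA, Int.natCast_natAbs], by rw [hnB, Int.natCast_natAbs]⟩

theorem exists_isPrime_mul_eq_span_of_dvd_sq_sub_sq (hrank : Module.finrank ℤ S = 2)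
    (hp : Prime p) {n : ℤ} (hpn : ¬ p ∣ 2 * n) {w : S} (htr : Algebra.trace ℤ S w = 0)
    (hw : (p : S) ∣ w ^ 2 - (n : S) ^ 2) :
    ∃ A B : Ideal S, A ≠ B ∧ A.IsPrime ∧ B.IsPrime ∧ Ideal.span {(p : S)} = A * B ∧
      (Ideal.absNorm A : ℤ) = |p| ∧ (Ideal.absNorm B : ℤ) = |p| := by
  have hndvd : ∀ k : ℤ, ¬ p ∣ 2 * k → ¬ (p : S) ∣ w + k := fun k hk hdvd =>
    hk (by simpa [hrank] using
      dvd_finrank_mul_of_algebraMap_dvd_add (R := ℤ) htr (by simpa using hdvd))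
  have hcop : IsCoprime (p : S) (2 * n) := by
    exact_mod_cast ((hp.coprime_iff_not_dvd).2 hpn).map (Int.castRingHom S)
  refine exists_isPrime_mul_eq_span_of_dvd_mul (x := w + n) (y := w + (-n : ℤ)) hrank hp ?_
    (hndvd n hpn) (hndvd (-n) (by rwa [mul_neg, dvd_neg])) ?_
  · convert hw using 1
    push_cast
    ring
  · convert hcop using 1
    push_cast
    ring

end RankTwo

theorem not_isSquare_of_eq_sq_mul_sq_add_of_squarefree {p a m d : ℤ} (hp : Odd p)
    (hd : d = a ^ 2 * m ^ 2 + 4 * a * p) (hsf : Squarefree d) : ¬ IsSquare d := by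
  rintro ⟨k, hk⟩
  have hd1 : d = 1 := by
    rw [hk]
    exact Int.isUnit_mul_self (hsf k (dvd_of_eq hk.symm))
  have ha_mul : a * (a * m ^ 2 + 4 * p) = 1 := by linear_combination hd1 - hd
  have ha_odd : Odd a := (Int.odd_mul.1 (ha_mul ▸ odd_one)).1
  have ha_sq : a * a = 1 := Int.isUnit_mul_self (.of_mul_eq_one _ ha_mul)
  have hm : m ^ 2 = 1 - 4 * (a * p) := by linear_combination hd1 - hd - m ^ 2 * ha_sq
  have hm_odd : Odd m := (Int.odd_pow' two_ne_zero).1 ⟨-2 * (a * p), by rw [hm]; ring⟩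
  have h8 : 8 ∣ m ^ 2 - 1 := Int.eight_dvd_sq_sub_one_of_odd hm_odd
  obtain ⟨j, hj⟩ := ha_odd.mul hp
  omega

open scoped NumberField in
theorem stmt_8_general (p a m d : ℤ) (hp : Prime p) (hp2 : ¬ p ∣ 2)
    (hd : d = a ^ 2 * m ^ 2 + 4 * a * p) (hsf : Squarefree d) (hcop : IsCoprime m p)
    (K : Type*) [Field K] [NumberField K] (hdeg : Module.finrank ℚ K = 2)
    (α : K) (hα : α ^ 2 = (d : K)) :
    ∃ A B : Ideal (𝓞 K),
      A ≠ B ∧ A.IsPrime ∧ B.IsPrime ∧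
      Ideal.span {(p : 𝓞 K)} = A * B ∧
      (Ideal.absNorm A : ℤ) = |p| ∧ (Ideal.absNorm B : ℤ) = |p| := by
  have hpa : ¬ p ∣ a := by
    rintro ⟨k, rfl⟩
    exact hp.not_isUnit (hsf p ⟨k ^ 2 * m ^ 2 + 4 * k, by rw [hd]; ring⟩)
  have hpm : ¬ p ∣ m := fun h => hp.not_isUnit (hcop.symm.isUnit_of_dvd h)
  have hpn : ¬ p ∣ 2 * (a * m) := by simp [hp.dvd_mul, hp2, hpa, hpm]
  have hodd : Odd p := Int.not_even_iff_odd.1 fun h =>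
    hp2 ((Int.prime_two.dvd_prime_iff_associated hp).1 h.two_dvd).symm.dvd
  have hd_sq : ¬ IsSquare d := not_isSquare_of_eq_sq_mul_sq_add_of_squarefree hodd hd hsf
  have hα_int : IsIntegral ℤ α := .of_pow two_pos (hα ▸ isIntegral_algebraMap (x := d))
  obtain ⟨w, hwα⟩ : ∃ w : 𝓞 K, (w : K) = α := ⟨⟨α, hα_int⟩, rfl⟩
  have hw : w ^ 2 = (d : 𝓞 K) :=
    NumberField.RingOfIntegers.ext (by simpa [hwα] using hα)
  refine exists_isPrime_mul_eq_span_of_dvd_sq_sub_sq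
    ((NumberField.RingOfIntegers.rank K).trans hdeg) hp hpn
    (trace_eq_zero_of_sq_eq_intCast hd_sq hw) ⟨4 * a, ?_⟩
  rw [hw, hd]
  push_cast
  ring

/-- Let `p > 2` be a prime and let `a > 1` and `m ≥ 1` be integers such that
`d = a²m² + 4ap` is squarefree and `gcd(m, p) = 1`. Then `p` splits completely
in the real quadratic field `ℚ(√d)`: the ideal generated by `p` in the ring of
integers factors as `𝔞·𝔞′` where `𝔞` and `𝔞′` are distinct prime ideals, each
of absolute norm `p`. -/
theorem stmt_8 (p a m d : ℤ) (hp : Prime p) (hp2 : 2 < p)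
    (ha : 1 < a) (hm : 1 ≤ m) (hd : d = a ^ 2 * m ^ 2 + 4 * a * p)
    (hsf : Squarefree d) (hcop : IsCoprime m p)
    (K : Type) [Field K] [NumberField K] (hdeg : Module.finrank ℚ K = 2)
    (α : K) (hα : α ^ 2 = (d : K)) :
    ∃ A B : Ideal (NumberField.RingOfIntegers K),
      A ≠ B ∧ A.IsPrime ∧ B.IsPrime ∧
      Ideal.span {(p : NumberField.RingOfIntegers K)} = A * B ∧
      (Ideal.absNorm A : ℤ) = p ∧ (Ideal.absNorm B : ℤ) = p := by
  simpa only [abs_of_pos (two_pos.trans hp2)] using stmt_8_general p a m d hp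
    (fun h => hp2.not_ge (Int.le_of_dvd two_pos h)) hd hsf hcop K hdeg α hα
end
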